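/- Vitali-type covering property for the intrinsic cylinders: Let max{2n/(n+2),1} < p < 2n/(n−2)_+ and let u, Q_{4R}, λ_o and the scaling factors μ_{z;r}^{(λ)} be as in the construction below. There exists a constant ĉ = ĉ(n,p) ≥ 20 such that whenever λ ≥ λ_o and 𝓕 is any collection of cylinders of the form Q_{4r}^{(μ_{z;r}^{(λ)})}(z) with z ∈ Q_{2R} and radius r ∈ (0, R/ĉ], then there exists a countable subfamily 𝓖 ⊆ 𝓕 of pairwise disjoint cylinders such that ∪_{Q ∈ 𝓕} Q ⊆ ∪_{Q ∈ 𝓖} Q̂, where for Q = Q_{4r}^{(μ_{z;r}^{(λ)})}(z) the enlarged cylinder is Q̂ := Q_{ĉ r}^{(μ_{z;r}^{(λ)})}(z). -/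

import Mathlib

open MeasureTheory Set
open scoped ENNReal

noncomputable section

abbrev Spc (n : ℕ) := EuclideanSpace ℝ (Fin n)
abbrev Vec (N : ℕ) := EuclideanSpace ℝ (Fin N)

variable {n N : ℕ}

/-- The scaled parabolic cylinder `Q_ρ^{(μ)}(z₀)`:
`B_ρ(x₀) × (t₀ − μ^{p−2}ρ^p, t₀ + μ^{p−2}ρ^p)` if `p < 2`, and
`B_{μ^{(2−p)/p}ρ}(x₀) × (t₀ − ρ^p, t₀ + ρ^p)` if `p ≥ 2`. -/
def parCyl (p μ ρ : ℝ) (z₀ : Spc n × ℝ) : Set (Spc n × ℝ) :=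
  if p < 2 then
    Metric.ball z₀.1 ρ ×ˢ Ioo (z₀.2 - μ ^ (p - 2) * ρ ^ p) (z₀.2 + μ ^ (p - 2) * ρ ^ p)
  else
    Metric.ball z₀.1 (μ ^ ((2 - p) / p) * ρ) ×ˢ Ioo (z₀.2 - ρ ^ p) (z₀.2 + ρ ^ p)

/-- The exponent `β := 2 − p + (𝔭 − 2)(2 + n/p)`, where `𝔭 = max{p, 2}`. -/
def betaEx (n : ℕ) (p : ℝ) : ℝ := 2 - p + (max p 2 - 2) * (2 + (n : ℝ) / p)

/-- The scaling factor `μ̃_{z;ρ}^{(λ)} := inf{μ ∈ [1, ∞) :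
(1/|Q_ρ|) ∬_{Q_ρ^{(μ)}(z)} |u|^p/ρ^p ≤ μ^{p−β} λ^p}`. -/
def mutilde (p lam : ℝ) (u : Spc n × ℝ → Vec N) (z : Spc n × ℝ) (ρ : ℝ) : ℝ :=
  sInf {μ : ℝ | 1 ≤ μ ∧
    (∫ w in parCyl p μ ρ z, ‖u w‖ ^ p / ρ ^ p) / (volume (parCyl p 1 ρ z)).toReal
      ≤ μ ^ (p - betaEx n p) * lam ^ p}

/-- The monotonized scaling factor `μ_{z;ρ}^{(λ)} := max_{r ∈ [ρ, R]} μ̃_{z;r}^{(λ)}`. -/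
def muF (p lam R : ℝ) (u : Spc n × ℝ → Vec N) (z : Spc n × ℝ) (ρ : ℝ) : ℝ :=
  sSup (mutilde p lam u z '' Icc ρ R)

/-!
Cylinders that share one scaling factor are the balls of a quasi-metric, so Vitali's covering
argument applies as soon as any two intersecting cylinders whose radii are comparable have
comparable scaling factors.

To compare the factors `μ₁` at `(z₁, r)` and `μ₂` at `(z₂, s)`, where `r ≤ 2s`, assume `μ₁ ≤ μ₂` and
take `σ ∈ [s, R]`. If `26σ ≤ R`, then for `μ ≥ μ₁` the cylinder `Q_σ^{(μ)}(z₂)` lies in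
`Q_{26σ}^{(2μ₁)}(z₁)`, on which the stopping inequality holds because `2μ₁ > μ₁ ≥ μ̃_{z₁;26σ}`;
passing from radius `26σ` to `σ` costs a fixed power of `26` since `p - β > 0`. If `26σ > R`, the
bound `μ̃_{z₂;σ} ≤ (4R/σ)^{(n+2p)/(p-β)}`, obtained from the whole cylinder `Q_{4R}`, is already
enough.
-/

section Exponents

variable {p a b c μ ρ : ℝ}

lemma betaEx_lt_of_lt (hp : 1 < p)
    (hp' : (n : ℝ) ≤ 2 ∨ p < 2 * (n : ℝ) / ((n : ℝ) - 2)) : betaEx n p < p := by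
  rw [betaEx]
  rcases le_total p 2 with h2 | h2
  · rw [max_eq_right h2]
    linarith
  · have hkey : p * ((n : ℝ) - 2) < 2 * n := by
      rcases le_or_gt (n : ℝ) 2 with hn | hn
      · nlinarith
      · exact (lt_div_iff₀ (by linarith)).1 (hp'.resolve_left hn.not_ge)
    have hsub : p - (2 - p + (p - 2) * (2 + n / p)) = (2 * n - p * (n - 2)) / p := by
      field_simp
      ring
    rw [max_eq_left h2, ← sub_pos, hsub]
    exact div_pos (by linarith) (by linarith)

lemma one_lt_of_betaEx_lt (hβ : betaEx n p < p) : 1 < p := by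
  rcases le_total p 2 with h2 | h2
  · rw [betaEx, max_eq_right h2] at hβ
    linarith
  · linarith

/-- The exponent `a` for which `Q_ρ^{(μ)}` has spatial radius `μ^a ρ`. -/
def spaceExp (p : ℝ) : ℝ := if p < 2 then 0 else (2 - p) / p

/-- The exponent `b` for which `Q_ρ^{(μ)}` has half-length `μ^b ρ^p` in time. -/
def timeExp (p : ℝ) : ℝ := if p < 2 then p - 2 else 0

lemma spaceExp_nonpos (p : ℝ) : spaceExp p ≤ 0 := by
  unfold spaceExp
  split_ifs
  · rfl
  · exact div_nonpos_of_nonpos_of_nonneg (by linarith) (by linarith)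

lemma neg_one_le_spaceExp (p : ℝ) : -1 ≤ spaceExp p := by
  unfold spaceExp
  split_ifs
  · norm_num
  · rw [le_div_iff₀ (by linarith)]
    linarith

lemma timeExp_nonpos (p : ℝ) : timeExp p ≤ 0 := by
  unfold timeExp
  split_ifs <;> linarith

lemma neg_le_timeExp (hp : 1 ≤ p) : -p ≤ timeExp p := by
  unfold timeExp
  split_ifs <;> linarith

lemma rpow_mul_rpow_le_mul_rpow (hc : 1 ≤ c) (hμ : 0 < μ) (hρ : 0 ≤ ρ) (hab : -a ≤ b) :
    μ ^ b * ρ ^ a ≤ (c * μ) ^ b * (c * ρ) ^ a := by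
  have hc0 : 0 < c := one_pos.trans_le hc
  calc μ ^ b * ρ ^ a ≤ c ^ (b + a) * (μ ^ b * ρ ^ a) :=
        le_mul_of_one_le_left (by positivity) (Real.one_le_rpow hc (by linarith))
    _ = (c * μ) ^ b * (c * ρ) ^ a := by
        rw [Real.mul_rpow hc0.le hμ.le, Real.mul_rpow hc0.le hρ, Real.rpow_add hc0]
        ring

end Exponents

section Cylinders

variable {p μ ν ρ σ a b c : ℝ} {w x y z : Spc n × ℝ}

lemma parCyl_eq_prod_ball (p μ ρ : ℝ) (z : Spc n × ℝ) :
    parCyl p μ ρ z =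
      Metric.ball z.1 (μ ^ spaceExp p * ρ) ×ˢ Metric.ball z.2 (μ ^ timeExp p * ρ ^ p) := by
  unfold parCyl spaceExp timeExp
  split_ifs <;> simp only [Real.ball_eq_Ioo, Real.rpow_zero, one_mul]

lemma mem_parCyl :
    w ∈ parCyl p μ ρ z ↔
      dist w.1 z.1 < μ ^ spaceExp p * ρ ∧ dist w.2 z.2 < μ ^ timeExp p * ρ ^ p := by
  rw [parCyl_eq_prod_ball, mem_prod, Metric.mem_ball, Metric.mem_ball]

lemma mem_parCyl_comm : w ∈ parCyl p μ ρ z ↔ z ∈ parCyl p μ ρ w := by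
  rw [mem_parCyl, mem_parCyl, dist_comm w.1, dist_comm w.2]

lemma mem_parCyl_self (p : ℝ) (hμ : 0 < μ) (hρ : 0 < ρ) (z : Spc n × ℝ) :
    z ∈ parCyl p μ ρ z := by
  rw [mem_parCyl, dist_self, dist_self]
  exact ⟨by positivity, by positivity⟩

lemma isOpen_parCyl (p μ ρ : ℝ) (z : Spc n × ℝ) : IsOpen (parCyl p μ ρ z) := by
  rw [parCyl_eq_prod_ball]
  exact Metric.isOpen_ball.prod Metric.isOpen_ball

lemma mem_parCyl_trans (hp : 1 ≤ p) (hμ : 0 < μ) (ha : 0 ≤ a) (hb : 0 ≤ b)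
    (hwy : w ∈ parCyl p μ a y) (hyz : y ∈ parCyl p μ b z) : w ∈ parCyl p μ (a + b) z := by
  rw [mem_parCyl] at *
  constructor
  · calc dist w.1 z.1 ≤ dist w.1 y.1 + dist y.1 z.1 := dist_triangle ..
      _ < μ ^ spaceExp p * a + μ ^ spaceExp p * b := add_lt_add hwy.1 hyz.1
      _ = μ ^ spaceExp p * (a + b) := by ring
  · calc dist w.2 z.2 ≤ dist w.2 y.2 + dist y.2 z.2 := dist_triangle ..
      _ < μ ^ timeExp p * a ^ p + μ ^ timeExp p * b ^ p := add_lt_add hwy.2 hyz.2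
      _ = μ ^ timeExp p * (a ^ p + b ^ p) := by ring
      _ ≤ μ ^ timeExp p * (a + b) ^ p := by
          gcongr
          exact Real.add_rpow_le_rpow_add ha hb hp

lemma parCyl_subset_of_nonempty_inter (hp : 1 ≤ p) (hμ : 0 < μ) (ha : 0 ≤ a) (hb : 0 ≤ b)
    (hc : 0 ≤ c) (hzx : (parCyl p μ b z ∩ parCyl p μ c x).Nonempty) :
    parCyl p μ a z ⊆ parCyl p μ (a + b + c) x := by
  obtain ⟨y, hyz, hyx⟩ := hzx
  exact fun w hw => mem_parCyl_trans hp hμ (by positivity) hc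
    (mem_parCyl_trans hp hμ ha hb hw (mem_parCyl_comm.1 hyz)) hyx

lemma parCyl_subset_parCyl (hp : 0 ≤ p) (hν : 0 < ν) (hνμ : ν ≤ μ) (hρ : 0 ≤ ρ) (hρσ : ρ ≤ σ)
    (z : Spc n × ℝ) : parCyl p μ ρ z ⊆ parCyl p ν σ z := by
  rw [parCyl_eq_prod_ball, parCyl_eq_prod_ball]
  have hspace : μ ^ spaceExp p ≤ ν ^ spaceExp p :=
    Real.rpow_le_rpow_of_nonpos hν hνμ (spaceExp_nonpos p)
  have htime : μ ^ timeExp p ≤ ν ^ timeExp p :=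
    Real.rpow_le_rpow_of_nonpos hν hνμ (timeExp_nonpos p)
  exact prod_mono (Metric.ball_subset_ball (by gcongr)) (Metric.ball_subset_ball (by gcongr))

lemma parCyl_subset_parCyl_mul (hp : 1 ≤ p) (hc : 1 ≤ c) (hμ : 0 < μ) (hρ : 0 ≤ ρ)
    (z : Spc n × ℝ) : parCyl p μ ρ z ⊆ parCyl p (c * μ) (c * ρ) z := by
  rw [parCyl_eq_prod_ball, parCyl_eq_prod_ball]
  refine prod_mono (Metric.ball_subset_ball ?_)
    (Metric.ball_subset_ball (rpow_mul_rpow_le_mul_rpow hc hμ hρ (neg_le_timeExp hp)))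
  simpa only [Real.rpow_one] using rpow_mul_rpow_le_mul_rpow hc hμ hρ (neg_one_le_spaceExp p)

lemma parCyl_subset_five_mul (hp : 1 ≤ p) (hc : 1 ≤ c) (hμ : 0 < μ) (hν : 0 < ν)
    (hνμ : ν ≤ c * μ) (ha : 0 ≤ a) (hb : 0 ≤ b) (hab : a ≤ 2 * b)
    (hzx : (parCyl p μ a z ∩ parCyl p ν b x).Nonempty) :
    parCyl p μ a z ⊆ parCyl p ν (5 * c * b) x := by
  have hsub : parCyl p μ a z ⊆ parCyl p ν (c * a) z :=
    (parCyl_subset_parCyl_mul hp hc hμ ha z).trans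
      (parCyl_subset_parCyl (by linarith) hν hνμ (by positivity) le_rfl z)
  have hrad : c * a + c * a + b ≤ 5 * c * b := by
    linarith [mul_le_mul_of_nonneg_left hab (by linarith : 0 ≤ c), mul_le_mul_of_nonneg_right hc hb]
  calc parCyl p μ a z ⊆ parCyl p ν (c * a) z := hsub
    _ ⊆ parCyl p ν (c * a + c * a + b) x :=
        parCyl_subset_of_nonempty_inter hp hν (by positivity) (by positivity) hb
          (hzx.mono (inter_subset_inter_left _ hsub))
    _ ⊆ parCyl p ν (5 * c * b) x :=
        parCyl_subset_parCyl (by linarith) hν le_rfl (by positivity) hrad x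

lemma parCyl_subset_two_mul_of_nonempty_inter (hp : 1 ≤ p) (hμ : 0 < μ) (hμν : μ ≤ ν) (ha : 0 ≤ a)
    (hb : 0 ≤ b) (hab : a ≤ 2 * b) (hbσ : b ≤ σ)
    (hxz : (parCyl p μ (4 * a) x ∩ parCyl p ν (4 * b) z).Nonempty) :
    parCyl p μ σ z ⊆ parCyl p (2 * μ) (26 * σ) x := by
  have hσ : 0 ≤ σ := hb.trans hbσ
  have hzx : (parCyl p μ (4 * b) z ∩ parCyl p μ (4 * a) x).Nonempty := by
    rw [inter_comm]
    exact hxz.mono (inter_subset_inter_right _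
      (parCyl_subset_parCyl (by linarith) hμ hμν (by linarith) le_rfl z))
  calc parCyl p μ σ z ⊆ parCyl p μ (σ + 4 * b + 4 * a) x :=
        parCyl_subset_of_nonempty_inter hp hμ hσ (by linarith) (by linarith) hzx
    _ ⊆ parCyl p μ (13 * σ) x :=
        parCyl_subset_parCyl (by linarith) hμ le_rfl (by positivity) (by linarith) x
    _ ⊆ parCyl p (2 * μ) (2 * (13 * σ)) x :=
        parCyl_subset_parCyl_mul hp one_le_two hμ (by positivity) x
    _ = parCyl p (2 * μ) (26 * σ) x := by rw [← mul_assoc]; norm_num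

lemma parCyl_subset_parCyl_four_mul {R : ℝ} (hp : 1 ≤ p) (hμ : 1 ≤ μ) (hρ : 0 ≤ ρ) (hρR : ρ ≤ R)
    (hz : z ∈ parCyl p 1 (2 * R) x) : parCyl p μ ρ z ⊆ parCyl p 1 (4 * R) x := by
  intro w hw
  have hw' := parCyl_subset_parCyl (by linarith) one_pos hμ hρ le_rfl z hw
  exact parCyl_subset_parCyl (by linarith) one_pos le_rfl (by linarith) (by linarith) x
    (mem_parCyl_trans hp one_pos hρ (by linarith) hw' hz)

theorem exists_countable_disjoint_parCyl_covering {ι : Type*} {R : ℝ} {𝓕 : Set ι}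
    {μ ρ : ι → ℝ} {z : ι → Spc n × ℝ} (hp : 1 ≤ p) (hc : 1 ≤ c) (hμ : ∀ i ∈ 𝓕, 0 < μ i)
    (hρ : ∀ i ∈ 𝓕, ρ i ∈ Ioc 0 R)
    (hcomp : ∀ i ∈ 𝓕, ∀ j ∈ 𝓕, ρ i ≤ 2 * ρ j →
      (parCyl p (μ i) (ρ i) (z i) ∩ parCyl p (μ j) (ρ j) (z j)).Nonempty → μ j ≤ c * μ i) :
    ∃ 𝓖 ⊆ 𝓕, 𝓖.Countable ∧ (𝓖.PairwiseDisjoint fun i => parCyl p (μ i) (ρ i) (z i)) ∧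
      (⋃ i ∈ 𝓕, parCyl p (μ i) (ρ i) (z i)) ⊆
        ⋃ i ∈ 𝓖, parCyl p (μ i) (5 * c * ρ i) (z i) := by
  have hne : ∀ i ∈ 𝓕, (parCyl p (μ i) (ρ i) (z i)).Nonempty := fun i hi =>
    ⟨z i, mem_parCyl_self p (hμ i hi) (hρ i hi).1 (z i)⟩
  obtain ⟨𝓖, h𝓖, hdisj, hmeet⟩ := Vitali.exists_disjoint_subfamily_covering_enlargement
    (fun i => parCyl p (μ i) (ρ i) (z i)) 𝓕 ρ 2 one_lt_two (fun i hi => (hρ i hi).1.le) R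
    (fun i hi => (hρ i hi).2) hne
  refine ⟨𝓖, h𝓖, hdisj.countable_of_isOpen (fun _ _ => isOpen_parCyl ..)
    fun i hi => hne i (h𝓖 hi), hdisj, iUnion₂_subset fun i hi => ?_⟩
  obtain ⟨j, hj, hij, hρij⟩ := hmeet i hi
  have hj' := h𝓖 hj
  exact (parCyl_subset_five_mul hp hc (hμ i hi) (hμ j hj') (hcomp i hi j hj' hρij hij)
    (hρ i hi).1.le (hρ j hj').1.le hρij hij).trans
      (subset_biUnion_of_mem (u := fun j => parCyl p (μ j) (5 * c * ρ j) (z j)) hj)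

lemma volume_real_parCyl_one (p : ℝ) (hρ : 0 < ρ) (z : Spc n × ℝ) :
    volume.real (parCyl p 1 ρ z) =
      ρ ^ ((n : ℝ) + p) * (2 * volume.real (Metric.ball (0 : Spc n) 1)) := by
  have hball : volume.real (Metric.ball z.1 ρ) =
      ρ ^ n * volume.real (Metric.ball (0 : Spc n) 1) := by
    rw [measureReal_def, Measure.addHaar_ball_of_pos _ _ hρ, ENNReal.toReal_mul,
      ENNReal.toReal_ofReal (by positivity), finrank_euclideanSpace_fin, measureReal_def]
  rw [parCyl_eq_prod_ball, Real.one_rpow, Real.one_rpow, one_mul, one_mul, Measure.volume_eq_prod,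
    measureReal_prod_prod, Real.volume_real_ball (by positivity), hball, Real.rpow_add hρ,
    Real.rpow_natCast]
  ring

lemma volume_real_parCyl_one_pos (p : ℝ) (hρ : 0 < ρ) (z : Spc n × ℝ) :
    0 < volume.real (parCyl p 1 ρ z) := by
  have hball : 0 < volume.real (Metric.ball (0 : Spc n) 1) :=
    ENNReal.toReal_pos (Metric.measure_ball_pos _ _ one_pos).ne' measure_ball_lt_top.ne
  rw [volume_real_parCyl_one p hρ]
  positivity

end Cylinders

section ScalingFactors

/-- The mass `λ^p ρ^p |Q_ρ|`, that is, the value of `∬_{Q_ρ} |u|^p` for which the mean of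
`|u|^p/ρ^p` is `λ^p`. All cylinders `Q_ρ(z)` have the same measure; the center `0` is a choice. -/
def criticalMass (n : ℕ) (p lam ρ : ℝ) : ℝ :=
  lam ^ p * (ρ ^ p * volume.real (parCyl p 1 ρ (0 : Spc n × ℝ)))

/-- The exponent `(n + 2p)/(p - β)` in the bounds for the scaling factors: multiplying the radius
by `c` multiplies the critical mass by `c^(n+2p)`, which `μ^{p-β}` balances when `μ` is
multiplied by `c` to this power. -/
def scalingExp (n : ℕ) (p : ℝ) : ℝ := (n + 2 * p) / (p - betaEx n p)

/-- The set whose infimum is `μ̃_{z;ρ}^{(λ)}`, with its inequality cleared of denominators. -/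
def admissibleScalings (p lam : ℝ) (u : Spc n × ℝ → Vec N) (z : Spc n × ℝ) (ρ : ℝ) : Set ℝ :=
  {μ | 1 ≤ μ ∧
    ∫ w in parCyl p μ ρ z, ‖u w‖ ^ p ≤ μ ^ (p - betaEx n p) * criticalMass n p lam ρ}

/-- The standing assumption that `u ∈ L^p(Q_{4R})` and that `λ` bounds the mean of `|u| / (4R)` in
`L^p(Q_{4R})`; unlike in the condition `λ ≥ λ₀`, no `1` is added to the mean. -/
structure IsMeanBound (p lam R : ℝ) (u : Spc n × ℝ → Vec N) (zhat : Spc n × ℝ) : Prop where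
  memLp : MemLp u (ENNReal.ofReal p) (volume.restrict (parCyl p 1 (4 * R) zhat))
  average_le : (⨍ w in parCyl p 1 (4 * R) zhat, ‖u w‖ ^ p / (4 * R) ^ p) ^ (1 / p) ≤ lam

variable {p lam R r s c μ ν ρ σ : ℝ} {u : Spc n × ℝ → Vec N} {z z₁ z₂ zhat : Spc n × ℝ}

lemma criticalMass_nonneg (hlam : 0 ≤ lam) (hρ : 0 ≤ ρ) : 0 ≤ criticalMass n p lam ρ := by
  unfold criticalMass
  positivity

lemma criticalMass_mul (hc : 0 < c) (hρ : 0 < ρ) :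
    criticalMass n p lam (c * ρ) = c ^ ((n : ℝ) + 2 * p) * criticalMass n p lam ρ := by
  rw [criticalMass, criticalMass, volume_real_parCyl_one p (mul_pos hc hρ),
    volume_real_parCyl_one p hρ, Real.mul_rpow hc.le hρ.le, Real.mul_rpow hc.le hρ.le,
    show (n : ℝ) + 2 * p = p + (n + p) by ring, Real.rpow_add hc p]
  ring

lemma criticalMass_eq (hρ : 0 < ρ) (z : Spc n × ℝ) :
    criticalMass n p lam ρ = lam ^ p * (ρ ^ p * volume.real (parCyl p 1 ρ z)) := by
  rw [criticalMass, volume_real_parCyl_one p hρ, volume_real_parCyl_one p hρ]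

lemma scalingExp_nonneg (hβ : betaEx n p < p) : 0 ≤ scalingExp n p := by
  have hp := one_lt_of_betaEx_lt hβ
  exact div_nonneg (by positivity) (sub_pos.2 hβ).le

lemma rpow_scalingExp_mul_criticalMass (hβ : betaEx n p < p) (hc : 0 < c) (hν : 0 ≤ ν)
    (hρ : 0 < ρ) :
    (c ^ scalingExp n p * ν) ^ (p - betaEx n p) * criticalMass n p lam ρ =
      ν ^ (p - betaEx n p) * criticalMass n p lam (c * ρ) := by
  rw [Real.mul_rpow (by positivity) hν, ← Real.rpow_mul hc.le, scalingExp,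
    div_mul_cancel₀ _ (sub_pos.2 hβ).ne', criticalMass_mul hc hρ]
  ring

lemma mutilde_eq_sInf_admissibleScalings (p lam : ℝ) (u : Spc n × ℝ → Vec N) (z : Spc n × ℝ)
    (hρ : 0 < ρ) : mutilde p lam u z ρ = sInf (admissibleScalings p lam u z ρ) := by
  have hvol := volume_real_parCyl_one_pos p hρ z
  unfold mutilde admissibleScalings
  congr! 4 with μ
  rw [← Measure.real, integral_div, div_div, div_le_iff₀ (by positivity), criticalMass_eq hρ z,
    mul_assoc]

lemma bddBelow_admissibleScalings : BddBelow (admissibleScalings p lam u z ρ) :=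
  ⟨1, fun _ hμ => hμ.1⟩

lemma mutilde_le_of_mem (hρ : 0 < ρ) (hμ : μ ∈ admissibleScalings p lam u z ρ) :
    mutilde p lam u z ρ ≤ μ := by
  rw [mutilde_eq_sInf_admissibleScalings p lam u z hρ]
  exact csInf_le bddBelow_admissibleScalings hμ

lemma rpow_scalingExp_mul_mem_admissibleScalings (hβ : betaEx n p < p) (hc : 1 ≤ c) (hν : 1 ≤ ν)
    (hρ : 0 < ρ)
    (hmass : ∫ w in parCyl p (c ^ scalingExp n p * ν) ρ z, ‖u w‖ ^ p ≤
      ν ^ (p - betaEx n p) * criticalMass n p lam (c * ρ)) :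
    c ^ scalingExp n p * ν ∈ admissibleScalings p lam u z ρ := by
  refine ⟨one_le_mul_of_one_le_of_one_le (Real.one_le_rpow hc (scalingExp_nonneg hβ)) hν, ?_⟩
  rwa [rpow_scalingExp_mul_criticalMass hβ (by linarith) (by linarith) hρ]

namespace IsMeanBound

lemma nonneg (h : IsMeanBound p lam R u zhat) (hR : 0 ≤ R) : 0 ≤ lam :=
  (Real.rpow_nonneg (integral_nonneg fun _ => by positivity) _).trans h.average_le

lemma integrableOn (h : IsMeanBound p lam R u zhat) (hp : 0 < p) :
    IntegrableOn (fun w => ‖u w‖ ^ p) (parCyl p 1 (4 * R) zhat) := by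
  have hint := h.memLp.integrable_norm_rpow (ENNReal.ofReal_pos.2 hp).ne' ENNReal.ofReal_ne_top
  rwa [ENNReal.toReal_ofReal hp.le] at hint

lemma setIntegral_le_criticalMass (h : IsMeanBound p lam R u zhat) (hp : 0 < p) (hR : 0 < R) :
    ∫ w in parCyl p 1 (4 * R) zhat, ‖u w‖ ^ p ≤ criticalMass n p lam (4 * R) := by
  have hvol := volume_real_parCyl_one_pos p (by positivity : 0 < 4 * R) zhat
  have hmean : ⨍ w in parCyl p 1 (4 * R) zhat, ‖u w‖ ^ p / (4 * R) ^ p ≤ lam ^ p :=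
    (Real.rpow_inv_le_iff_of_pos (integral_nonneg fun _ => by positivity) (h.nonneg hR.le) hp).1
      (one_div p ▸ h.average_le)
  rwa [setAverage_eq, integral_div, smul_eq_mul, inv_mul_eq_div, div_div,
    div_le_iff₀ (by positivity), ← criticalMass_eq (by positivity)] at hmean

lemma setIntegral_mono {A B : Set (Spc n × ℝ)} (h : IsMeanBound p lam R u zhat) (hp : 0 < p)
    (hAB : A ⊆ B) (hB : B ⊆ parCyl p 1 (4 * R) zhat) :
    ∫ w in A, ‖u w‖ ^ p ≤ ∫ w in B, ‖u w‖ ^ p :=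
  setIntegral_mono_set ((h.integrableOn hp).mono_set hB) (ae_of_all _ fun _ => by positivity)
    hAB.eventuallyLE

lemma rpow_scalingExp_mem_admissibleScalings (h : IsMeanBound p lam R u zhat)
    (hβ : betaEx n p < p) (hz : z ∈ parCyl p 1 (2 * R) zhat) (hr : r ∈ Ioc 0 R) :
    (4 * R / r) ^ scalingExp n p ∈ admissibleScalings p lam u z r := by
  obtain ⟨hr0, hrR⟩ := hr
  have hp := one_lt_of_betaEx_lt hβ
  have hR : 0 < R := hr0.trans_le hrR
  have hratio : 1 ≤ 4 * R / r := (one_le_div hr0).2 (by linarith)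
  have hμ : 1 ≤ (4 * R / r) ^ scalingExp n p := Real.one_le_rpow hratio (scalingExp_nonneg hβ)
  rw [← mul_one ((4 * R / r) ^ scalingExp n p)] at hμ ⊢
  refine rpow_scalingExp_mul_mem_admissibleScalings hβ hratio le_rfl hr0 ?_
  rw [Real.one_rpow, one_mul, div_mul_cancel₀ _ hr0.ne']
  exact (h.setIntegral_mono (by linarith) (parCyl_subset_parCyl_four_mul hp.le hμ hr0.le hrR hz)
    Subset.rfl).trans (h.setIntegral_le_criticalMass (by linarith) hR)

lemma one_le_mutilde (h : IsMeanBound p lam R u zhat) (hβ : betaEx n p < p)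
    (hz : z ∈ parCyl p 1 (2 * R) zhat) (hr : r ∈ Ioc 0 R) : 1 ≤ mutilde p lam u z r := by
  rw [mutilde_eq_sInf_admissibleScalings p lam u z hr.1]
  exact le_csInf ⟨_, h.rpow_scalingExp_mem_admissibleScalings hβ hz hr⟩ fun _ hμ => hμ.1

lemma mem_admissibleScalings_of_mutilde_lt (h : IsMeanBound p lam R u zhat)
    (hβ : betaEx n p < p) (hz : z ∈ parCyl p 1 (2 * R) zhat) (hr : r ∈ Ioc 0 R)
    (hμ : mutilde p lam u z r < μ) : μ ∈ admissibleScalings p lam u z r := by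
  have hp := one_lt_of_betaEx_lt hβ
  have hmass := criticalMass_nonneg (n := n) (p := p)
    (h.nonneg (hr.1.le.trans hr.2)) hr.1.le
  rw [mutilde_eq_sInf_admissibleScalings p lam u z hr.1] at hμ
  obtain ⟨ν, ⟨hν1, hν⟩, hνμ⟩ :=
    exists_lt_of_csInf_lt ⟨_, h.rpow_scalingExp_mem_admissibleScalings hβ hz hr⟩ hμ
  refine ⟨hν1.trans hνμ.le, ?_⟩
  calc ∫ w in parCyl p μ r z, ‖u w‖ ^ p ≤ ∫ w in parCyl p ν r z, ‖u w‖ ^ p :=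
        h.setIntegral_mono (by linarith)
          (parCyl_subset_parCyl (by linarith) (by linarith) hνμ.le hr.1.le le_rfl z)
          (parCyl_subset_parCyl_four_mul hp.le hν1 hr.1.le hr.2 hz)
    _ ≤ ν ^ (p - betaEx n p) * criticalMass n p lam r := hν
    _ ≤ μ ^ (p - betaEx n p) * criticalMass n p lam r := by
        have := (sub_pos.2 hβ).le
        gcongr

lemma mutilde_le_muF (h : IsMeanBound p lam R u zhat) (hβ : betaEx n p < p)
    (hz : z ∈ parCyl p 1 (2 * R) zhat) (hρ : 0 < ρ) (hr : r ∈ Icc ρ R) :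
    mutilde p lam u z r ≤ muF p lam R u z ρ := by
  refine le_csSup ⟨(4 * R / ρ) ^ scalingExp n p, ?_⟩ (mem_image_of_mem _ hr)
  rintro _ ⟨t, ht, rfl⟩
  have ht0 : 0 < t := hρ.trans_le ht.1
  have hR : 0 ≤ R := ht0.le.trans ht.2
  have hexp := scalingExp_nonneg hβ
  calc mutilde p lam u z t ≤ (4 * R / t) ^ scalingExp n p :=
        mutilde_le_of_mem ht0 (h.rpow_scalingExp_mem_admissibleScalings hβ hz ⟨ht0, ht.2⟩)
    _ ≤ (4 * R / ρ) ^ scalingExp n p := by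
        gcongr
        exact ht.1

lemma one_le_muF (h : IsMeanBound p lam R u zhat) (hβ : betaEx n p < p)
    (hz : z ∈ parCyl p 1 (2 * R) zhat) (hρ : ρ ∈ Ioc 0 R) : 1 ≤ muF p lam R u z ρ :=
  (h.one_le_mutilde hβ hz hρ).trans (h.mutilde_le_muF hβ hz hρ.1 ⟨le_rfl, hρ.2⟩)

end IsMeanBound

/-- The factor by which the scaling factors of intersecting cylinders of comparable radii may
differ. Its base is `104 = 4 * 26`, the bound for `4R/σ` when `26σ > R`; smaller radii only need
the base `26`. -/
def scalingRatio (n : ℕ) (p : ℝ) : ℝ := 2 * 104 ^ scalingExp n p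

lemma two_le_scalingRatio (hβ : betaEx n p < p) : 2 ≤ scalingRatio n p :=
  le_mul_of_one_le_right zero_le_two (Real.one_le_rpow (by norm_num) (scalingExp_nonneg hβ))

namespace IsMeanBound

lemma mutilde_le_scalingRatio_of_lt (h : IsMeanBound p lam R u zhat) (hβ : betaEx n p < p)
    (hz : z ∈ parCyl p 1 (2 * R) zhat) (hσ : σ ∈ Ioc 0 R) (hσR : R < 26 * σ) :
    mutilde p lam u z σ ≤ scalingRatio n p := by
  obtain ⟨hσ0, hσR'⟩ := hσ
  have hR : 0 < R := hσ0.trans_le hσR'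
  have hexp := scalingExp_nonneg hβ
  calc mutilde p lam u z σ ≤ (4 * R / σ) ^ scalingExp n p :=
        mutilde_le_of_mem hσ0 (h.rpow_scalingExp_mem_admissibleScalings hβ hz ⟨hσ0, hσR'⟩)
    _ ≤ 104 ^ scalingExp n p := by
        gcongr
        rw [div_le_iff₀ hσ0]
        linarith
    _ ≤ scalingRatio n p := le_mul_of_one_le_left (by positivity) one_le_two

lemma mutilde_le_of_parCyl_subset (h : IsMeanBound p lam R u zhat) (hβ : betaEx n p < p)
    (hz₁ : z₁ ∈ parCyl p 1 (2 * R) zhat) (hσ : 0 < σ) (hc : 1 ≤ c) (hcσ : c * σ ≤ R) (hν : 1 ≤ ν)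
    (hlt : mutilde p lam u z₁ (c * σ) < ν)
    (hsub : parCyl p (c ^ scalingExp n p * ν) σ z₂ ⊆ parCyl p ν (c * σ) z₁) :
    mutilde p lam u z₂ σ ≤ c ^ scalingExp n p * ν := by
  have hp := one_lt_of_betaEx_lt hβ
  have hcσ0 : 0 < c * σ := by positivity
  have hadm := h.mem_admissibleScalings_of_mutilde_lt hβ hz₁ ⟨hcσ0, hcσ⟩ hlt
  refine mutilde_le_of_mem hσ (rpow_scalingExp_mul_mem_admissibleScalings hβ hc hν hσ ?_)
  exact (h.setIntegral_mono (by linarith) hsub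
    (parCyl_subset_parCyl_four_mul hp.le hν hcσ0.le hcσ hz₁)).trans hadm.2

theorem muF_le_scalingRatio_mul (h : IsMeanBound p lam R u zhat) (hβ : betaEx n p < p)
    (hz₁ : z₁ ∈ parCyl p 1 (2 * R) zhat) (hz₂ : z₂ ∈ parCyl p 1 (2 * R) zhat)
    (hr : r ∈ Ioc 0 R) (hs : s ∈ Ioc 0 R) (hrs : r ≤ 2 * s)
    (hmeet : (parCyl p (muF p lam R u z₁ r) (4 * r) z₁ ∩
      parCyl p (muF p lam R u z₂ s) (4 * s) z₂).Nonempty) :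
    muF p lam R u z₂ s ≤ scalingRatio n p * muF p lam R u z₁ r := by
  have hp := one_lt_of_betaEx_lt hβ
  have hμ₁ := h.one_le_muF hβ hz₁ hr
  have hratio := two_le_scalingRatio hβ
  set μ₁ := muF p lam R u z₁ r
  set μ₂ := muF p lam R u z₂ s
  rcases le_total μ₂ μ₁ with hle | hle
  · exact hle.trans (le_mul_of_one_le_left (by linarith) (by linarith))
  refine csSup_le ((nonempty_Icc.2 hs.2).image _) ?_
  rintro _ ⟨σ, ⟨hsσ, hσR⟩, rfl⟩
  have hσ : 0 < σ := hs.1.trans_le hsσ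
  rcases le_or_gt (26 * σ) R with hsmall | hlarge
  · have hlt : mutilde p lam u z₁ (26 * σ) < 2 * μ₁ :=
      (h.mutilde_le_muF hβ hz₁ hr.1 ⟨by linarith, hsmall⟩).trans_lt (by linarith)
    have hexp : (1 : ℝ) ≤ 26 ^ scalingExp n p :=
      Real.one_le_rpow (by norm_num) (scalingExp_nonneg hβ)
    have hμ₁_le : μ₁ ≤ 26 ^ scalingExp n p * (2 * μ₁) :=
      (by linarith : μ₁ ≤ 2 * μ₁).trans (le_mul_of_one_le_left (by linarith) hexp)
    have hsub : parCyl p (26 ^ scalingExp n p * (2 * μ₁)) σ z₂ ⊆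
        parCyl p (2 * μ₁) (26 * σ) z₁ :=
      (parCyl_subset_parCyl (by linarith) (by linarith) hμ₁_le hσ.le le_rfl z₂).trans
        (parCyl_subset_two_mul_of_nonempty_inter hp.le (by linarith) hle hr.1.le hs.1.le hrs hsσ
          hmeet)
    calc mutilde p lam u z₂ σ ≤ 26 ^ scalingExp n p * (2 * μ₁) :=
          h.mutilde_le_of_parCyl_subset hβ hz₁ hσ (by norm_num) hsmall (by linarith) hlt hsub
      _ ≤ 104 ^ scalingExp n p * (2 * μ₁) := by
          have := scalingExp_nonneg hβ
          gcongr
          norm_num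
      _ = scalingRatio n p * μ₁ := by
          rw [scalingRatio]
          ring
  · exact (h.mutilde_le_scalingRatio_of_lt hβ hz₂ ⟨hσ, hσR⟩ hlarge).trans
      (le_mul_of_one_le_right (by linarith) hμ₁)

end IsMeanBound

end ScalingFactors

theorem vitali_covering_general (n : ℕ) (p : ℝ) (hβ : betaEx n p < p) :
    ∃ chat : ℝ, 20 ≤ chat ∧
      ∀ (N : ℕ) (R : ℝ) (u : Spc n × ℝ → Vec N) (zhat : Spc n × ℝ) (lam : ℝ),
        0 < R →
        MemLp u (ENNReal.ofReal p) (volume.restrict (parCyl p 1 (4 * R) zhat)) →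
        (⨍ w in parCyl p 1 (4 * R) zhat, ‖u w‖ ^ p / (4 * R) ^ p) ^ (1 / p) ≤ lam →
        ∀ 𝓕 : Set ((Spc n × ℝ) × ℝ),
          (∀ zr ∈ 𝓕, zr.1 ∈ parCyl p 1 (2 * R) zhat ∧ zr.2 ∈ Ioc 0 (R / chat)) →
          ∃ 𝓖 ⊆ 𝓕, 𝓖.Countable ∧
            (𝓖.PairwiseDisjoint fun zr =>
              parCyl p (muF p lam R u zr.1 zr.2) (4 * zr.2) zr.1) ∧
            (⋃ zr ∈ 𝓕, parCyl p (muF p lam R u zr.1 zr.2) (4 * zr.2) zr.1)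
              ⊆ ⋃ zr ∈ 𝓖, parCyl p (muF p lam R u zr.1 zr.2) (chat * zr.2) zr.1 := by
  have hp := one_lt_of_betaEx_lt hβ
  have hratio := two_le_scalingRatio hβ
  refine ⟨20 * scalingRatio n p, by linarith, fun N R u zhat lam hR hu hlam 𝓕 h𝓕 => ?_⟩
  have h : IsMeanBound p lam R u zhat := ⟨hu, hlam⟩
  have hrad : ∀ zr ∈ 𝓕, zr.2 ∈ Ioc 0 R := fun zr hzr =>
    ⟨(h𝓕 zr hzr).2.1, (h𝓕 zr hzr).2.2.trans (div_le_self hR.le (by linarith))⟩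
  have hcov := exists_countable_disjoint_parCyl_covering (𝓕 := 𝓕) (R := 4 * R)
    (μ := fun zr => muF p lam R u zr.1 zr.2) (ρ := fun zr => 4 * zr.2) (z := Prod.fst)
    hp.le (by linarith : 1 ≤ scalingRatio n p)
    (fun zr hzr => one_pos.trans_le (h.one_le_muF hβ (h𝓕 zr hzr).1 (hrad zr hzr)))
    (fun zr hzr => ⟨by linarith [(hrad zr hzr).1], by linarith [(hrad zr hzr).2]⟩)
    (fun a ha b hb hab hmeet => h.muF_le_scalingRatio_mul hβ (h𝓕 a ha).1 (h𝓕 b hb).1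
      (hrad a ha) (hrad b hb) (by linarith) hmeet)
  have hchat : ∀ r : ℝ, 5 * scalingRatio n p * (4 * r) = 20 * scalingRatio n p * r :=
    fun r => by ring
  simpa only [hchat] using hcov

/-- Vitali-type covering property for the intrinsic cylinders: let
`max{2n/(n+2), 1} < p < 2n/(n−2)₊`. There exists `ĉ = ĉ(n, p) ≥ 20` such that whenever
`λ ≥ λ₀` and `𝓕` is any collection of cylinders `Q_{4r}^{(μ_{z;r}^{(λ)})}(z)` with `z ∈ Q_{2R}`
and `r ∈ (0, R/ĉ]`, there is a countable subfamily `𝓖 ⊆ 𝓕` of pairwise disjoint cylinders with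
`⋃_{Q ∈ 𝓕} Q ⊆ ⋃_{Q ∈ 𝓖} Q̂` where `Q̂ = Q_{ĉr}^{(μ_{z;r}^{(λ)})}(z)`. -/
theorem vitali_covering (n : ℕ) (p : ℝ) (hn : 1 ≤ n)
    (hp : max (2 * (n : ℝ) / ((n : ℝ) + 2)) 1 < p)
    (hp' : (n : ℝ) ≤ 2 ∨ p < 2 * (n : ℝ) / ((n : ℝ) - 2)) :
    ∃ chat : ℝ, 20 ≤ chat ∧
      ∀ (N : ℕ) (T R : ℝ) (Ω : Set (Spc n)) (u : Spc n × ℝ → Vec N)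
        (zhat : Spc n × ℝ) (lam₀ lam : ℝ),
        0 < T → IsOpen Ω → Bornology.IsBounded Ω → 0 < R →
        parCyl p 1 (4 * R) zhat ⊆ Ω ×ˢ Ioo 0 T →
        Measurable u →
        MemLp u (ENNReal.ofReal p) (volume.restrict (Ω ×ˢ Ioo 0 T)) →
        1 + (⨍ w in parCyl p 1 (4 * R) zhat, ‖u w‖ ^ p / (4 * R) ^ p) ^ (1 / p) ≤ lam₀ →
        lam₀ ≤ lam →
        ∀ 𝓕 : Set ((Spc n × ℝ) × ℝ),
          (∀ zr ∈ 𝓕, zr.1 ∈ parCyl p 1 (2 * R) zhat ∧ zr.2 ∈ Ioc 0 (R / chat)) →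
          ∃ 𝓖 ⊆ 𝓕, 𝓖.Countable ∧
            (𝓖.PairwiseDisjoint fun zr =>
              parCyl p (muF p lam R u zr.1 zr.2) (4 * zr.2) zr.1) ∧
            (⋃ zr ∈ 𝓕, parCyl p (muF p lam R u zr.1 zr.2) (4 * zr.2) zr.1)
              ⊆ ⋃ zr ∈ 𝓖, parCyl p (muF p lam R u zr.1 zr.2) (chat * zr.2) zr.1 := by
  obtain ⟨chat, hchat, hcov⟩ :=
    vitali_covering_general n p (betaEx_lt_of_lt ((le_max_right _ _).trans_lt hp) hp')
  exact ⟨chat, hchat, fun N T R Ω u zhat lam₀ lam _ _ _ hR hQ _ hu h₀ hlam =>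
    hcov N R u zhat lam hR (hu.mono_measure (Measure.restrict_mono_set _ hQ)) (by linarith)⟩
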